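/- arXiv:2405.04930 — 5 statements merged into one kernel-verified Lean document; each statement's English description precedes it below -/
import Mathlib

section
/- Let 0 ≤ α < 2. For every smooth function z : ℝ → ℝ with compact support contained in the open interval (0,1), one has the Hardy-type inequality ((1-α)²/4) · ∫₀¹ z(x)²/x^{2-α} dx ≤ ∫₀¹ x^α z′(x)² dx. -/
open MeasureTheory

lemma hardy_aux_cont (β : ℝ) (g : ℝ → ℝ) (hg : Continuous g)
    (h0 : ∀ᶠ x in nhds (0:ℝ), g x = 0) : Continuous (fun x : ℝ => x ^ β * g x) := by
  rw [continuous_iff_continuousAt]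
  intro x
  by_cases hx : x = 0
  · subst hx
    have : (fun x : ℝ => x ^ β * g x) =ᶠ[nhds 0] fun _ => (0:ℝ) := by
      filter_upwards [h0] with y hy
      simp [hy]
    exact continuousAt_const.congr this.symm
  · exact (Real.continuousAt_rpow_const x β (Or.inl hx)).mul hg.continuousAt

/-- Hardy-type inequality: for `0 ≤ α < 2` and any smooth `z` with compact support
contained in `(0,1)`,
`((1-α)²/4) ∫₀¹ z(x)²/x^(2-α) dx ≤ ∫₀¹ x^α z'(x)² dx`. -/
theorem hardy_inequality (α : ℝ) (hα0 : 0 ≤ α) (hα2 : α < 2)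
    (z : ℝ → ℝ) (hz : ContDiff ℝ (⊤ : ℕ∞) z) (hsupp : tsupport z ⊆ Set.Ioo 0 1) :
    (1 - α) ^ 2 / 4 * (∫ x in Set.Ioo (0 : ℝ) 1, z x ^ 2 / x ^ (2 - α)) ≤
      ∫ x in Set.Ioo (0 : ℝ) 1, x ^ α * deriv z x ^ 2 := by
  have hz0 : ∀ᶠ x in nhds (0:ℝ), z x = 0 := by
    have : (0:ℝ) ∉ tsupport z := fun h => lt_irrefl _ (hsupp h).1
    exact notMem_tsupport_iff_eventuallyEq.1 this
  have hz00 : z 0 = 0 := hz0.self_of_nhds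
  have hz1 : z 1 = 0 := image_eq_zero_of_notMem_tsupport fun h => lt_irrefl _ (hsupp h).2
  have hdz0 : ∀ᶠ x in nhds (0:ℝ), deriv z x = 0 := by
    filter_upwards [hz0.eventually_nhds] with x hx
    have : z =ᶠ[nhds x] fun _ => (0:ℝ) := hx
    rw [this.deriv_eq]; simp
  have hzc : Continuous z := hz.continuous
  have hdc : Continuous (deriv z) := hz.continuous_deriv (by simp)
  have hd : ∀ x, HasDerivAt z (deriv z x) x := fun x =>
    (hz.differentiable (by simp) x).hasDerivAt
  have c1 : Continuous (fun x : ℝ => x ^ (α-2) * z x ^ 2) :=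
    hardy_aux_cont _ _ (hzc.pow 2) (by filter_upwards [hz0] with x hx; simp [hx])
  have c2 : Continuous (fun x : ℝ => x ^ (α-1) * (2 * z x * deriv z x)) :=
    hardy_aux_cont _ _ (by fun_prop) (by filter_upwards [hz0] with x hx; simp [hx])
  have c3 : Continuous (fun x : ℝ => x ^ α * deriv z x ^ 2) :=
    hardy_aux_cont _ _ (hdc.pow 2) (by filter_upwards [hdz0] with x hx; simp [hx])
  have hG : ∀ x, HasDerivAt (fun x : ℝ => x ^ (α-1) * z x ^ 2)
      ((α-1) * (x ^ (α-2) * z x ^ 2) + x ^ (α-1) * (2 * z x * deriv z x)) x := by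
    intro x
    by_cases hx : x = 0
    · subst hx
      have : (fun x : ℝ => x ^ (α-1) * z x ^ 2) =ᶠ[nhds 0] fun _ => (0:ℝ) := by
        filter_upwards [hz0] with y hy
        simp [hy]
      simpa [hz00] using (hasDerivAt_const (0:ℝ) (0:ℝ)).congr_of_eventuallyEq this
    · have h1 := (Real.hasDerivAt_rpow_const (p := α-1) (Or.inl hx)).mul ((hd x).pow 2)
      refine HasDerivAt.congr_deriv h1 ?_
      rw [show α - 1 - 1 = α - 2 by ring]
      simp
      ring
  have hint : ∫ x in (0:ℝ)..1, ((α-1) * (x ^ (α-2) * z x ^ 2)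
      + x ^ (α-1) * (2 * z x * deriv z x)) = 0 := by
    rw [intervalIntegral.integral_eq_sub_of_hasDerivAt (fun x _ => hG x)
      (((c1.const_mul _).add c2).intervalIntegrable _ _)]
    simp [hz00, hz1]
  have e1 : ∫ x in Set.Ioo (0 : ℝ) 1, z x ^ 2 / x ^ (2 - α)
      = ∫ x in (0:ℝ)..1, x ^ (α-2) * z x ^ 2 := by
    rw [intervalIntegral.integral_of_le zero_le_one, integral_Ioc_eq_integral_Ioo]
    refine setIntegral_congr_fun measurableSet_Ioo fun x hx => ?_
    rw [show α - 2 = -(2-α) by ring, Real.rpow_neg hx.1.le]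
    ring
  rw [e1, ← integral_Ioc_eq_integral_Ioo, ← intervalIntegral.integral_of_le zero_le_one,
    ← intervalIntegral.integral_const_mul]
  have key : ∫ x in (0:ℝ)..1, (1-α)^2/4 * (x ^ (α-2) * z x ^ 2) ≤
      ∫ x in (0:ℝ)..1, (x ^ α * deriv z x ^ 2 + (α-1)/2 * ((α-1) * (x ^ (α-2) * z x ^ 2)
      + x ^ (α-1) * (2 * z x * deriv z x))) := by
    refine intervalIntegral.integral_mono_on_of_le_Ioo zero_le_one
      ((c1.const_mul _).intervalIntegrable _ _)
      ((c3.add (((c1.const_mul _).add c2).const_mul _)).intervalIntegrable _ _) ?_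
    intro x hx
    have hx0 : 0 < x := hx.1
    have a1 : x ^ (α-1) = x ^ (α-2) * x := by
      rw [← Real.rpow_add_one hx0.ne']; congr 1; ring
    have a2 : x ^ α = x ^ (α-2) * x * x := by
      rw [← a1, ← Real.rpow_add_one hx0.ne']; congr 1; ring
    rw [a1, a2]
    have := mul_nonneg (Real.rpow_nonneg hx0.le (α-2))
      (sq_nonneg (x * deriv z x + (α-1)/2 * z x))
    nlinarith [this]
  have c4 : Continuous (fun x : ℝ => (α-1)/2 * ((α-1) * (x ^ (α-2) * z x ^ 2)
      + x ^ (α-1) * (2 * z x * deriv z x))) := ((c1.const_mul _).add c2).const_mul _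
  rwa [intervalIntegral.integral_add (c3.intervalIntegrable _ _)
    (c4.intervalIntegrable _ _),
    intervalIntegral.integral_const_mul ((α-1)/2), hint, mul_zero, add_zero] at key
end

section
/- Let T > 0 and let (Λ_k)_{k≥1} be a sequence of positive real numbers such that ∑_{k≥1} 1/Λ_k < +∞ and such that there is a constant ρ > 0 with |Λ_k − Λ_l| ≥ ρ|k − l| for all k, l ≥ 1. Then there exists a family (q_k)_{k≥1} of functions in L²(0,T) that is biorthogonal to the family of exponentials (e^{−Λ_k t})_{k≥1}, i.e. ∫₀ᵀ q_k(t) e^{−Λ_l t} dt equals 1 if k = l and 0 if k ≠ l. Moreover, for every ε > 0 there exists C_ε > 0 such that ‖q_k‖_{L²(0,T)} ≤ C_ε e^{ε Λ_k} for all k ≥ 1. -/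
open MeasureTheory

lemma sum_inv_sqrt (S : Finset ℕ) (hS : ∀ m ∈ S, 1 ≤ m) :
    ∑ m ∈ S, 1 / √(m : ℝ) ≤ 2 * √(S.card : ℝ) := by
  induction S using Finset.induction_on_max with
  | empty => simp
  | insert a s hlt ih =>
    have hna : a ∉ s := fun h => lt_irrefl _ (hlt a h)
    rw [Finset.sum_insert hna, Finset.card_insert_of_notMem hna]
    have ih' := ih (fun m hm => hS m (Finset.mem_insert_of_mem hm))
    have hcard : s.card + 1 ≤ a := by
      have : s ⊆ Finset.Ico 1 a := fun m hm =>
        Finset.mem_Ico.2 ⟨hS m (Finset.mem_insert_of_mem hm), hlt m hm⟩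
      have h2 := Finset.card_le_card this
      have := hS a (Finset.mem_insert_self _ _)
      simp at h2; omega
    have hc : ((s.card : ℝ) + 1) ≤ a := by exact_mod_cast hcard
    have hn : (0 : ℝ) ≤ s.card := Nat.cast_nonneg _
    push_cast
    have h1 : 1 / √(a : ℝ) ≤ 1 / √((s.card : ℝ) + 1) := by
      apply one_div_le_one_div_of_le (Real.sqrt_pos.2 (by linarith)) (Real.sqrt_le_sqrt hc)
    have h2 : 1 / √((s.card : ℝ) + 1) ≤ 2 * √((s.card : ℝ) + 1) - 2 * √(s.card : ℝ) := by
      have p := Real.sqrt_pos.2 (show (0 : ℝ) < (s.card : ℝ) + 1 by linarith)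
      have q := Real.sqrt_nonneg (s.card : ℝ)
      have e1 := Real.sq_sqrt hn
      have e2 := Real.sq_sqrt (show (0 : ℝ) ≤ (s.card : ℝ) + 1 by linarith)
      rw [div_le_iff₀ p]
      nlinarith [sq_nonneg (√((s.card : ℝ) + 1) - √(s.card : ℝ))]
    linarith

lemma sum_inv_sqrt_abs (k : ℕ) (F : Finset ℕ) (hk : k ∉ F) :
    ∑ l ∈ F, 1 / √|(k : ℝ) - l| ≤ 4 * √(F.card : ℝ) := by
  rw [← Finset.sum_filter_add_sum_filter_not F (fun l => l < k)]
  have h1 : ∑ l ∈ F.filter (fun l => l < k), 1 / √|(k : ℝ) - l| ≤ 2 * √(F.card : ℝ) := by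
    have hinj : Set.InjOn (fun l => k - l) (F.filter (fun l => l < k)) := by
      intro a ha b hb h
      simp at ha hb h; omega
    have := sum_inv_sqrt ((F.filter (fun l => l < k)).image (fun l => k - l)) (by
      intro m hm
      simp at hm; omega)
    rw [Finset.sum_image hinj, Finset.card_image_of_injOn hinj] at this
    refine le_trans (le_of_eq ?_) (this.trans ?_)
    · refine Finset.sum_congr rfl fun l hl => ?_
      have hl' : l < k := (Finset.mem_filter.1 hl).2
      rw [Nat.cast_sub hl'.le, abs_of_nonneg]
      have : (l : ℝ) < k := by exact_mod_cast hl'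
      linarith
    · gcongr
      exact Finset.filter_subset _ _
  have h2 : ∑ l ∈ F.filter (fun l => ¬ l < k), 1 / √|(k : ℝ) - l| ≤ 2 * √(F.card : ℝ) := by
    have hk' : ∀ l ∈ F.filter (fun l => ¬ l < k), k < l := by
      intro l hl
      have := Finset.mem_filter.1 hl
      have : l ≠ k := by rintro rfl; exact hk this.1
      omega
    have hinj : Set.InjOn (fun l => l - k) (F.filter (fun l => ¬ l < k)) := by
      intro a ha b hb h
      have := hk' a ha
      have := hk' b hb
      simp at h; omega
    have := sum_inv_sqrt ((F.filter (fun l => ¬ l < k)).image (fun l => l - k)) (by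
      intro m hm
      obtain ⟨l, hl, rfl⟩ := Finset.mem_image.1 hm
      have := hk' l hl
      omega)
    rw [Finset.sum_image hinj, Finset.card_image_of_injOn hinj] at this
    refine le_trans (le_of_eq ?_) (this.trans ?_)
    · refine Finset.sum_congr rfl fun l hl => ?_
      have hl' := hk' l hl
      have : (k : ℝ) < l := by exact_mod_cast hl'
      rw [Nat.cast_sub hl'.le, abs_sub_comm, abs_of_nonneg]
      linarith
    · gcongr
      exact Finset.filter_subset _ _
  linarith

lemma log_one_add_le_sqrt (x : ℝ) (hx : 0 ≤ x) : Real.log (1 + x) ≤ √x := by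
  have h0 := Real.sqrt_nonneg x
  have h1 := Real.sq_sqrt hx
  rw [Real.log_le_iff_le_exp (by linarith)]
  have h3 := Real.sum_le_exp_of_nonneg h0 4
  simp [Finset.sum_range_succ, Nat.factorial] at h3
  nlinarith [sq_nonneg (√x - 1), sq_nonneg (√x - 3/2), mul_nonneg h0 (sq_nonneg (√x - 3/2))]

/-- lower bound on products -/
lemma prod_lower (Λ : ℕ → ℝ) (hΛpos : ∀ k, 0 < Λ k)
    (hsum : Summable fun k => 1 / Λ k)
    (ρ : ℝ) (hρ : 0 < ρ)
    (hgap : ∀ k l : ℕ, ρ * |(k : ℝ) - (l : ℝ)| ≤ |Λ k - Λ l|) (ε : ℝ) (hε : 0 < ε) :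
    ∃ C > 0, ∀ k, ∀ F : Finset ℕ, k ∉ F →
      C * Real.exp (-(ε * Λ k)) ≤ ∏ l ∈ F, |1 - Λ k / Λ l| := by
  obtain ⟨η, hη, hη1, hη2⟩ : ∃ η > 0, 2 * η ≤ ε / 4 ∧ 50 * η ≤ ε / 4 * (ρ * ε) := by
    refine ⟨min (ε / 8) (ε / 4 * (ρ * ε) / 50), by positivity, ?_, ?_⟩
    · have := min_le_left (ε / 8) (ε / 4 * (ρ * ε) / 50); linarith
    · have := min_le_right (ε / 8) (ε / 4 * (ρ * ε) / 50); linarith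
  obtain ⟨N, hN⟩ : ∃ N : ℕ, ∀ G : Finset ℕ, (∀ l ∈ G, N ≤ l) → ∑ l ∈ G, 1 / Λ l ≤ η := by
    obtain ⟨s, hs⟩ := summable_iff_vanishing_norm.1 hsum η hη
    refine ⟨s.sup id + 1, fun G hG => ?_⟩
    have := hs G (by
      rw [Finset.disjoint_left]
      intro a ha has
      have h1 := hG a ha
      have h2 : a ≤ s.sup id := Finset.le_sup (f := id) has
      omega)
    exact (le_abs_self _).trans this.le
  -- splitting bound
  have hsplit : ∀ (G : Finset ℕ) (c : ℝ) (u : ℕ → ℝ), 0 ≤ c → (∀ l ∈ G, u l ≤ 1) →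
      (∀ l ∈ G, u l ≤ c * (1 / Λ l)) → ∑ l ∈ G, u l ≤ N + c * η := by
    intro G c u hc h1 h2
    rw [← Finset.sum_filter_add_sum_filter_not G (fun l => l < N)]
    refine add_le_add ?_ ?_
    · calc ∑ l ∈ G.filter (fun l => l < N), u l ≤ ∑ l ∈ G.filter (fun l => l < N), (1 : ℝ) :=
            Finset.sum_le_sum fun l hl => h1 l (Finset.mem_filter.1 hl).1
        _ = ((G.filter (fun l => l < N)).card : ℝ) := by simp
        _ ≤ N := by
          have : G.filter (fun l => l < N) ⊆ Finset.range N := fun l hl =>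
            Finset.mem_range.2 (Finset.mem_filter.1 hl).2
          have := Finset.card_le_card this
          rw [Finset.card_range] at this
          exact_mod_cast this
    · calc ∑ l ∈ G.filter (fun l => ¬ l < N), u l
          ≤ ∑ l ∈ G.filter (fun l => ¬ l < N), c * (1 / Λ l) :=
            Finset.sum_le_sum fun l hl => h2 l (Finset.mem_filter.1 hl).1
        _ = c * ∑ l ∈ G.filter (fun l => ¬ l < N), 1 / Λ l := by rw [Finset.mul_sum]
        _ ≤ c * η := by
          gcongr
          exact hN _ fun l hl => not_lt.1 (Finset.mem_filter.1 hl).2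
  refine ⟨Real.exp (-(N + 25 * N / (ρ * ε))), Real.exp_pos _, fun k F hk => ?_⟩
  have hΛk := hΛpos k
  have hd : ∀ l ∈ F, ρ * |(k : ℝ) - l| ≤ |Λ k - Λ l| ∧ 0 < |(k : ℝ) - l| ∧ 0 < |Λ k - Λ l| := by
    intro l hl
    have hne : (k : ℝ) - l ≠ 0 := by
      intro h
      apply hk
      have : k = l := by exact_mod_cast sub_eq_zero.1 h
      rwa [this]
    have hp := abs_pos.2 hne
    exact ⟨hgap k l, hp, lt_of_lt_of_le (by positivity) (hgap k l)⟩
  have hterm : ∀ l ∈ F, Real.exp (-Real.log (1 + Λ k / |Λ k - Λ l|)) ≤ |1 - Λ k / Λ l| := by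
    intro l hl
    obtain ⟨-, -, h3⟩ := hd l hl
    have hΛl := hΛpos l
    rw [Real.exp_neg, Real.exp_log (by positivity)]
    have e : |1 - Λ k / Λ l| = |Λ k - Λ l| / Λ l := by
      rw [show 1 - Λ k / Λ l = -((Λ k - Λ l) / Λ l) by field_simp; ring, abs_neg, abs_div,
        abs_of_pos hΛl]
    rw [e, inv_le_iff_one_le_mul₀ (by positivity)]
    have : |Λ k - Λ l| / Λ l * (1 + Λ k / |Λ k - Λ l|) = (|Λ k - Λ l| + Λ k) / Λ l := by
      field_simp
    rw [this, one_le_div hΛl]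
    have := neg_abs_le (Λ k - Λ l)
    linarith
  have hS : ∑ l ∈ F, Real.log (1 + Λ k / |Λ k - Λ l|) ≤ N + 25 * N / (ρ * ε) + ε * Λ k := by
    rw [← Finset.sum_filter_add_sum_filter_not F (fun l => Λ l < 2 * Λ k)]
    set F1 := F.filter (fun l => Λ l < 2 * Λ k) with hF1
    have b2 : ∑ l ∈ F.filter (fun l => ¬ Λ l < 2 * Λ k), Real.log (1 + Λ k / |Λ k - Λ l|)
        ≤ N + (2 * Λ k) * η := by
      have key : ∀ l ∈ F.filter (fun l => ¬ Λ l < 2 * Λ k),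
          Real.log (1 + Λ k / |Λ k - Λ l|) ≤ (2 * Λ k) * (1 / Λ l) ∧ (2 * Λ k) * (1 / Λ l) ≤ 1 := by
        intro l hl
        obtain ⟨hlF, hl2⟩ := Finset.mem_filter.1 hl
        obtain ⟨-, -, h3⟩ := hd l hlF
        have hΛl := hΛpos l
        push Not at hl2
        constructor
        · have := Real.log_le_sub_one_of_pos (show 0 < 1 + Λ k / |Λ k - Λ l| by positivity)
          refine this.trans ?_
          have h4 : Λ l / 2 ≤ |Λ k - Λ l| := by
            have := neg_abs_le (Λ k - Λ l)
            linarith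
          have h5 : Λ k / |Λ k - Λ l| ≤ Λ k / (Λ l / 2) := by gcongr
          have h6 : Λ k / (Λ l / 2) = (2 * Λ k) * (1 / Λ l) := by field_simp
          linarith
        · rw [mul_one_div, div_le_one hΛl]; exact hl2
      exact hsplit _ _ _ (by positivity) (fun l hl => (key l hl).1.trans (key l hl).2)
        (fun l hl => (key l hl).1)
    have bc : (F1.card : ℝ) ≤ N + (2 * Λ k) * η := by
      have := hsplit F1 (2 * Λ k) (fun _ => 1) (by positivity) (fun _ _ => le_rfl) (by
        intro l hl
        have := (Finset.mem_filter.1 hl).2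
        rw [mul_one_div, le_div_iff₀ (hΛpos l)]
        linarith)
      simpa using this
    have b1 : ∑ l ∈ F1, Real.log (1 + Λ k / |Λ k - Λ l|)
        ≤ √(Λ k / ρ) * (4 * √(F1.card : ℝ)) := by
      calc ∑ l ∈ F1, Real.log (1 + Λ k / |Λ k - Λ l|)
          ≤ ∑ l ∈ F1, √(Λ k / ρ) * (1 / √|(k : ℝ) - l|) := by
            refine Finset.sum_le_sum fun l hl => ?_
            obtain ⟨h1, h2, h3⟩ := hd l (Finset.mem_filter.1 hl).1
            refine (log_one_add_le_sqrt _ (by positivity)).trans ?_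
            rw [mul_one_div, ← Real.sqrt_div (by positivity)]
            apply Real.sqrt_le_sqrt
            rw [div_div]
            gcongr
        _ = √(Λ k / ρ) * ∑ l ∈ F1, (1 / √|(k : ℝ) - l|) := by rw [Finset.mul_sum]
        _ ≤ _ := by
          gcongr
          exact sum_inv_sqrt_abs k F1 fun h => hk (Finset.mem_filter.1 h).1
    have b3 : √(Λ k / ρ) * (4 * √(F1.card : ℝ)) ≤ ε * Λ k / 4 + 25 * F1.card / (ρ * ε) := by
      have e1 := Real.sq_sqrt (show 0 ≤ Λ k / ρ by positivity)
      have e2 := Real.sq_sqrt (show (0 : ℝ) ≤ F1.card by positivity)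
      set X := √(Λ k / ρ)
      set Y := √(F1.card : ℝ)
      have hX : Λ k = ρ * X ^ 2 := by rw [e1]; field_simp
      clear_value X Y
      rw [← e2, hX]
      have hs : 0 < ρ * ε := by positivity
      have : X * (4 * Y) ≤ (ρ * ε) * X ^ 2 / 4 + 25 * Y ^ 2 / (ρ * ε) := by
        set s := ρ * ε
        rw [← sub_nonneg]
        have : s * X ^ 2 / 4 + 25 * Y ^ 2 / s - X * (4 * Y)
          = ((s * X - 8 * Y) ^ 2 + 36 * Y ^ 2) / (4 * s) := by field_simp; ring
        rw [this]; positivity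
      calc _ ≤ _ := this
        _ = _ := by ring
    have b4 : 25 * F1.card / (ρ * ε) ≤ 25 * N / (ρ * ε) + ε / 4 * Λ k := by
      rw [div_add' _ _ _ (by positivity)]
      gcongr
      nlinarith [mul_le_mul_of_nonneg_right hη2 hΛk.le]
    have b5 : (2 * Λ k) * η ≤ ε / 4 * Λ k := by nlinarith
    have : 0 < ε * Λ k := by positivity
    linarith
  calc Real.exp (-(N + 25 * N / (ρ * ε))) * Real.exp (-(ε * Λ k))
      = Real.exp (-(N + 25 * N / (ρ * ε) + ε * Λ k)) := by rw [← Real.exp_add]; ring_nf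
    _ ≤ Real.exp (-∑ l ∈ F, Real.log (1 + Λ k / |Λ k - Λ l|)) := by
        apply Real.exp_le_exp.2; linarith
    _ = ∏ l ∈ F, Real.exp (-Real.log (1 + Λ k / |Λ k - Λ l|)) := by
        rw [← Real.exp_sum, Finset.sum_neg_distrib]
    _ ≤ _ := Finset.prod_le_prod (fun _ _ => (Real.exp_pos _).le) hterm

/-- bounded measurable functions supported in `[0,s]` -/
def GoodFn (s : ℝ) (f : ℝ → ℝ) : Prop :=
  Measurable f ∧ (∃ M, ∀ t, |f t| ≤ M) ∧ ∀ t, t ∉ Set.Icc 0 s → f t = 0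

lemma GoodFn.integrable_mul {s : ℝ} {f g : ℝ → ℝ} (hf : GoodFn s f) (hg : Measurable g)
    (hb : ∃ M, ∀ t ∈ Set.Icc 0 s, |g t| ≤ M) : Integrable (fun t => f t * g t) := by
  obtain ⟨hm, ⟨M, hM⟩, h0⟩ := hf
  obtain ⟨M', hM'⟩ := hb
  have hs : Function.support (fun t => f t * g t) ⊆ Set.Icc 0 s := by
    intro t ht
    by_contra h
    exact ht (by simp [h0 t h])
  rw [← integrableOn_iff_integrable_of_support_subset hs]
  refine Measure.integrableOn_of_bounded (M := M * M') (by simp)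
    (hm.mul hg).aestronglyMeasurable ?_
  filter_upwards [ae_restrict_mem measurableSet_Icc] with t ht
  rw [Real.norm_eq_abs, abs_mul]
  exact mul_le_mul (hM t) (hM' t ht) (abs_nonneg _) ((abs_nonneg _).trans (hM t))

lemma GoodFn.integrable_mul_good {s s' : ℝ} {f g : ℝ → ℝ} (hf : GoodFn s f) (hg : GoodFn s' g) :
    Integrable (fun t => f t * g t) := by
  obtain ⟨M, hM⟩ := hg.2.1
  exact hf.integrable_mul hg.1 ⟨M, fun t _ => hM t⟩

lemma GoodFn.integrable_exp {s : ℝ} {f : ℝ → ℝ} (hf : GoodFn s f) (c : ℝ) :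
    Integrable (fun t => f t * Real.exp (-c * t)) := by
  refine hf.integrable_mul (by fun_prop) ⟨Real.exp (|c| * s), fun t ht => ?_⟩
  rw [abs_of_pos (Real.exp_pos _)]
  apply Real.exp_le_exp.2
  have := neg_abs_le c
  have h1 := ht.1
  have h2 := ht.2
  have := abs_nonneg c
  nlinarith

lemma GoodFn.shift {s h r : ℝ} (hh : 0 ≤ h) (hr : s + h ≤ r) {f : ℝ → ℝ} (hf : GoodFn s f) :
    GoodFn r (fun t => f (t - h)) := by
  obtain ⟨hm, ⟨M, hM⟩, h0⟩ := hf
  refine ⟨hm.comp (by fun_prop), ⟨M, fun t => hM _⟩, fun t ht => h0 _ fun h' => ht ?_⟩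
  exact ⟨by linarith [h'.1], by linarith [h'.2]⟩

lemma GoodFn.add {s : ℝ} {f g : ℝ → ℝ} (hf : GoodFn s f) (hg : GoodFn s g) :
    GoodFn s (fun t => f t + g t) := by
  obtain ⟨hm, ⟨M, hM⟩, h0⟩ := hf
  obtain ⟨hm', ⟨M', hM'⟩, h0'⟩ := hg
  refine ⟨hm.add hm', ⟨M + M', fun t => (abs_add_le _ _).trans (add_le_add (hM t) (hM' t))⟩,
    fun t ht => by simp [h0 t ht, h0' t ht]⟩

lemma GoodFn.smul {s : ℝ} {f : ℝ → ℝ} (c : ℝ) (hf : GoodFn s f) :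
    GoodFn s (fun t => c * f t) := by
  obtain ⟨hm, ⟨M, hM⟩, h0⟩ := hf
  refine ⟨hm.const_mul c, ⟨|c| * M, fun t => ?_⟩, fun t ht => by simp [h0 t ht]⟩
  rw [abs_mul]
  exact mul_le_mul_of_nonneg_left (hM t) (abs_nonneg _)

/-- the basic operator -/
noncomputable def opA (h B : ℝ) (f : ℝ → ℝ) : ℝ → ℝ := fun t =>
  (1 / (2 * (B - 1))) * ((-1) * f t + ((B - 1) * f (t - h) + B * f (t - (2 * h))))

lemma GoodFn.opA {s h r : ℝ} (B : ℝ) (hh : 0 ≤ h) (hr : s + 2 * h ≤ r) {f : ℝ → ℝ}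
    (hf : GoodFn s f) : GoodFn r (opA h B f) := by
  have h0 : GoodFn r f := by
    have := hf.shift le_rfl (show s + 0 ≤ r by linarith)
    simpa using this
  have h1 := hf.shift hh (show s + h ≤ r by linarith)
  have h2 := hf.shift (show 0 ≤ 2 * h by linarith) hr
  exact GoodFn.smul _ ((h0.smul (-1)).add ((h1.smul (B - 1)).add (h2.smul B)))

lemma laplace_shift (f : ℝ → ℝ) (h c : ℝ) :
    ∫ t, f (t - h) * Real.exp (-c * t) = Real.exp (-c * h) * ∫ t, f t * Real.exp (-c * t) := by
  rw [← integral_const_mul, ← integral_sub_right_eq_self (fun t => Real.exp (-c * h) * (f t * Real.exp (-c * t))) h]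
  congr 1; ext t
  have : Real.exp (-c * t) = Real.exp (-c * h) * Real.exp (-c * (t - h)) := by
    rw [← Real.exp_add]; ring_nf
  rw [this]; ring

lemma laplace_opA {s h B : ℝ} (hh : 0 ≤ h) {f : ℝ → ℝ} (hf : GoodFn s f) (c : ℝ) :
    ∫ t, opA h B f t * Real.exp (-c * t) =
      ((B * Real.exp (-c * h) - 1) * (Real.exp (-c * h) + 1) / (2 * (B - 1))) *
        ∫ t, f t * Real.exp (-c * t) := by
  have i0 := hf.integrable_exp c
  have i1 := (hf.shift hh le_rfl).integrable_exp c
  have i2 := (hf.shift (show 0 ≤ 2 * h by linarith) le_rfl).integrable_exp c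
  have e : (fun t => opA h B f t * Real.exp (-c * t)) = fun t =>
      (1 / (2 * (B - 1))) * ((-1) * (f t * Real.exp (-c * t)) +
        ((B - 1) * (f (t - h) * Real.exp (-c * t)) +
          B * (f (t - (2 * h)) * Real.exp (-c * t)))) := by
    ext t; unfold opA; ring
  rw [e, integral_const_mul, integral_add (i0.const_mul _)
    ((i1.const_mul _).fun_add (i2.const_mul _)), integral_add (i1.const_mul _) (i2.const_mul _),
    integral_const_mul, integral_const_mul, integral_const_mul, laplace_shift, laplace_shift]
  have : Real.exp (-c * (2 * h)) = Real.exp (-c * h) ^ 2 := by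
    rw [← Real.exp_nat_mul]; push_cast; ring_nf
  rw [this]
  ring

lemma sq_shift (f : ℝ → ℝ) (h : ℝ) : ∫ t, f (t - h) * f (t - h) = ∫ t, f t * f t :=
  integral_sub_right_eq_self (fun t => f t * f t) h

lemma norm_opA {s h B : ℝ} (hh : 0 ≤ h) (hB : 1 < B) {f : ℝ → ℝ} (hf : GoodFn s f) :
    ∫ t, opA h B f t * opA h B f t ≤ (B / (B - 1)) ^ 2 * ∫ t, f t * f t := by
  have g1 := hf.shift hh le_rfl
  have g2 := hf.shift (show 0 ≤ 2 * h by linarith) le_rfl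
  have gA := hf.opA B hh le_rfl
  have i0 := hf.integrable_mul_good hf
  have i1 := g1.integrable_mul_good g1
  have i2 := g2.integrable_mul_good g2
  have hB' : 0 < B - 1 := by linarith
  calc ∫ t, opA h B f t * opA h B f t ≤
      ∫ t, (B / (2 * (B - 1) ^ 2)) * (f t * f t + ((B - 1) * (f (t - h) * f (t - h)) +
        B * (f (t - 2 * h) * f (t - 2 * h)))) := by
        refine integral_mono (gA.integrable_mul_good gA)
          ((i0.fun_add ((i1.const_mul _).fun_add (i2.const_mul _))).const_mul _) fun t => ?_
        simp only [opA]
        generalize f t = a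
        generalize f (t - h) = b
        generalize f (t - 2 * h) = c
        have : (B / (2 * (B - 1) ^ 2)) * (a * a + ((B - 1) * (b * b) + B * (c * c))) -
          (1 / (2 * (B - 1)) * (-1 * a + ((B - 1) * b + B * c))) *
          (1 / (2 * (B - 1)) * (-1 * a + ((B - 1) * b + B * c))) =
          ((B - 1) * (a + b) ^ 2 + B * (a + c) ^ 2 + (B - 1) * B * (b - c) ^ 2) /
            (4 * (B - 1) ^ 2) := by
          field_simp; ring
        rw [← sub_nonneg, this]; positivity
    _ = _ := by
        rw [integral_const_mul, integral_add i0
          ((i1.const_mul _).fun_add (i2.const_mul _)), integral_add (i1.const_mul _) (i2.const_mul _),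
          integral_const_mul, integral_const_mul, sq_shift, sq_shift]
        field_simp; ring

lemma norm_opA_six {s h : ℝ} (hh : 0 ≤ h) {f : ℝ → ℝ} (hf : GoodFn s f) :
    ∫ t, opA h 6 f t * opA h 6 f t ≤ ∫ t, f t * f t := by
  have g1 := hf.shift hh le_rfl
  have g2 := hf.shift (show 0 ≤ 2 * h by linarith) le_rfl
  have gA := hf.opA 6 hh le_rfl
  have i0 := hf.integrable_mul_good hf
  have i1 := g1.integrable_mul_good g1
  have i2 := g2.integrable_mul_good g2
  have i01 := hf.integrable_mul_good g1
  have i12 := g1.integrable_mul_good g2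
  have e12 : ∫ t, f (t - h) * f (t - 2 * h) = ∫ t, f t * f (t - h) := by
    rw [← integral_sub_right_eq_self (fun t => f t * f (t - h)) h]
    congr 1; ext t; ring_nf
  calc ∫ t, opA h 6 f t * opA h 6 f t ≤
      ∫ t, ((8 / 100) * (f t * f t) + ((50 / 100) * (f (t - h) * f (t - h)) +
        ((42 / 100) * (f (t - 2 * h) * f (t - 2 * h)) + ((-36 / 100) * (f t * f (t - h)) +
         (36 / 100) * (f (t - h) * f (t - 2 * h)))))) := by
        refine integral_mono (gA.integrable_mul_good gA)
          ((i0.const_mul _).fun_add ((i1.const_mul _).fun_add ((i2.const_mul _).fun_add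
            ((i01.const_mul _).fun_add (i12.const_mul _))))) fun t => ?_
        simp only [opA]
        generalize f t = a
        generalize f (t - h) = b
        generalize f (t - 2 * h) = c
        nlinarith [sq_nonneg (a - 2 * b + c), sq_nonneg (b - a)]
    _ = _ := by
        rw [integral_add (i0.const_mul _) ((i1.const_mul _).fun_add ((i2.const_mul _).fun_add
            ((i01.const_mul _).fun_add (i12.const_mul _)))),
          integral_add (i1.const_mul _) ((i2.const_mul _).fun_add
            ((i01.const_mul _).fun_add (i12.const_mul _))),
          integral_add (i2.const_mul _) ((i01.const_mul _).fun_add (i12.const_mul _)),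
          integral_add (i01.const_mul _) (i12.const_mul _)]
        simp only [integral_const_mul]
        rw [e12, sq_shift, sq_shift]
        ring

/-- lower bound for the multiplier; `h * L = log B` -/
lemma mult_lower {h L c : ℝ} (hh : 0 < h) (hL : 0 < L) (hc : 0 < c) :
    |1 - c / L| * Real.exp (-(2 * h) * c) ≤
      |(Real.exp (h * L) * Real.exp (-c * h) - 1) * (Real.exp (-c * h) + 1) /
        (2 * (Real.exp (h * L) - 1))| := by
  set B := Real.exp (h * L) with hBdef
  have hB : 1 < B := Real.one_lt_exp_iff.2 (by positivity)
  set z := Real.exp (-c * h) with hz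
  have hzp : 0 < z := Real.exp_pos _
  set x := c / L with hx
  have hxp : 0 < x := by positivity
  have hBx : B ^ x * z = 1 := by
    rw [hBdef, ← Real.exp_mul, hz, ← Real.exp_add, Real.exp_eq_one_iff, hx]
    field_simp; ring
  have hz2 : Real.exp (-(2 * h) * c) = z ^ 2 := by
    rw [hz, ← Real.exp_nat_mul]; push_cast; ring_nf
  have key : (B - 1) * |1 - x| * z ≤ |B * z - 1| := by
    rcases le_total x 1 with h1 | h1
    · have := rpow_one_add_le_one_add_mul_self (show -1 ≤ B - 1 by linarith) hxp.le h1
      rw [show 1 + (B - 1) = B by ring] at this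
      rw [abs_of_nonneg (by linarith)]
      refine le_trans ?_ (le_abs_self _)
      nlinarith
    · have := one_add_mul_self_le_rpow_one_add (show -1 ≤ B - 1 by linarith) h1
      rw [show 1 + (B - 1) = B by ring] at this
      rw [abs_of_nonpos (by linarith)]
      refine le_trans ?_ (neg_le_abs _)
      nlinarith
  have hz1 : z ≤ 1 := Real.exp_le_one_iff.2 (by nlinarith)
  have hB1 : 0 < B - 1 := by linarith
  rw [hz2, abs_div, abs_mul, abs_of_pos (show 0 < z + 1 by linarith),
    abs_of_pos (show 0 < 2 * (B - 1) by linarith), le_div_iff₀ (by linarith)]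
  have a := abs_nonneg (1 - x)
  calc |1 - x| * z ^ 2 * (2 * (B - 1)) = ((B - 1) * |1 - x| * z) * (2 * z) := by ring
    _ ≤ |B * z - 1| * (z + 1) := by gcongr; linarith

noncomputable def mlt (h L c : ℝ) : ℝ :=
  (Real.exp (h * L) * Real.exp (-c * h) - 1) * (Real.exp (-c * h) + 1) /
        (2 * (Real.exp (h * L) - 1))

lemma mlt_self (h L : ℝ) : mlt h L L = 0 := by
  unfold mlt
  rw [← Real.exp_add]
  ring_nf; simp

lemma iterate_exists (Λ h K : ℕ → ℝ) (hh : ∀ l, 0 < h l)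
    (hK : ∀ l s f, GoodFn s f → ∫ t, opA (h l) (Real.exp (h l * Λ l)) f t *
      opA (h l) (Real.exp (h l * Λ l)) f t ≤ (K l) ^ 2 * ∫ t, f t * f t)
    (s : ℝ) (ψ : ℝ → ℝ) (hψ : GoodFn s ψ) (F : Finset ℕ) :
    ∃ f, GoodFn (s + ∑ l ∈ F, 2 * h l) f ∧
      (∀ c, ∫ t, f t * Real.exp (-c * t) =
        (∏ l ∈ F, mlt (h l) (Λ l) c) * ∫ t, ψ t * Real.exp (-c * t)) ∧
      ∫ t, f t * f t ≤ (∏ l ∈ F, K l) ^ 2 * ∫ t, ψ t * ψ t := by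
  induction F using Finset.induction_on with
  | empty => exact ⟨ψ, by simpa using hψ, by simp, by simp⟩
  | insert a F ha ih =>
    obtain ⟨f, h1, h2, h3⟩ := ih
    refine ⟨opA (h a) (Real.exp (h a * Λ a)) f, h1.opA _ (hh a).le ?_, fun c => ?_, ?_⟩
    · rw [Finset.sum_insert ha]; linarith
    · rw [laplace_opA (hh a).le h1, h2, Finset.prod_insert ha, mlt]; ring
    · rw [Finset.prod_insert ha]
      calc _ ≤ _ := hK a _ f h1
        _ ≤ (K a) ^ 2 * ((∏ l ∈ F, K l) ^ 2 * ∫ t, ψ t * ψ t) := by gcongr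
        _ = _ := by ring

lemma hilbert_bio {H : Type*} [NormedAddCommGroup H] [InnerProductSpace ℝ H] [CompleteSpace H]
    (e : ℕ → H) (Bd : ℕ → ℝ → Prop) (hex : ∀ k, ∃ b, Bd k b)
    (hfin : ∀ k b, Bd k b → 0 < b ∧ ∀ n, ∃ q : H, ‖q‖ ≤ b ∧
      ∀ l < n, inner ℝ q (e l) = if k = l then (1 : ℝ) else 0) :
    ∃ q : ℕ → H, (∀ k l, inner ℝ (q k) (e l) = if k = l then (1 : ℝ) else 0) ∧
      ∀ k b, Bd k b → ‖q k‖ ≤ b := by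
  have main : ∀ k, ∃ q : H, (∀ l, inner ℝ q (e l) = if k = l then (1 : ℝ) else 0) ∧
      ∀ b, Bd k b → ‖q‖ ≤ b := by
    intro k
    set W := Submodule.span ℝ (e '' {l | l ≠ k}) with hW
    set V := W.topologicalClosure with hV
    have hcl : IsClosed (V : Set H) := W.isClosed_topologicalClosure
    have : CompleteSpace V := hcl.completeSpace_coe
    set p : H := V.starProjection (e k) with hp
    set u := e k - p with hu
    have hpV : p ∈ V := Submodule.starProjection_apply_mem _ _
    have huV : ∀ v ∈ V, inner ℝ u v = (0 : ℝ) := by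
      intro v hv
      exact Submodule.starProjection_inner_eq_zero (K := V) (e k) v hv
    have hue : inner ℝ u (e k) = ‖u‖ ^ 2 := by
      have : e k = u + p := by simp [hu]
      rw [this, inner_add_right, huV p hpV, real_inner_self_eq_norm_sq]; simp
    have hlow : ∀ b, Bd k b → 1 ≤ b * ‖u‖ := by
      intro b hb
      obtain ⟨hb0, hq⟩ := hfin k b hb
      have hclosed : IsClosed {v : H | 1 ≤ b * ‖e k - v‖} :=
        isClosed_le continuous_const (by fun_prop)
      have hsub : (W : Set H) ⊆ {v : H | 1 ≤ b * ‖e k - v‖} := by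
        intro v hv
        have : ∃ n, v ∈ Submodule.span ℝ (e '' {l | l ≠ k ∧ l < n}) := by
          rw [SetLike.mem_coe, hW] at hv
          induction hv using Submodule.span_induction with
          | mem x hx =>
            obtain ⟨l, hl, rfl⟩ := hx
            exact ⟨l + 1, Submodule.subset_span ⟨l, ⟨hl, Nat.lt_succ_self l⟩, rfl⟩⟩
          | zero => exact ⟨0, Submodule.zero_mem _⟩
          | add x y _ _ hx hy =>
            obtain ⟨n, hn⟩ := hx
            obtain ⟨m, hm⟩ := hy
            refine ⟨max n m, Submodule.add_mem _
              (Submodule.span_mono (Set.image_mono ?_) hn)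
              (Submodule.span_mono (Set.image_mono ?_) hm)⟩
            · exact fun l hl => ⟨hl.1, lt_of_lt_of_le hl.2 (le_max_left _ _)⟩
            · exact fun l hl => ⟨hl.1, lt_of_lt_of_le hl.2 (le_max_right _ _)⟩
          | smul a x _ hx =>
            obtain ⟨n, hn⟩ := hx
            exact ⟨n, Submodule.smul_mem _ _ hn⟩
        obtain ⟨n, hn⟩ := this
        obtain ⟨q, hqb, hql⟩ := hq (max n (k + 1))
        have hqv : inner ℝ q v = (0 : ℝ) := by
          clear hv
          induction hn using Submodule.span_induction with
          | mem x hx =>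
            obtain ⟨l, hl, rfl⟩ := hx
            rw [hql l (lt_of_lt_of_le hl.2 (le_max_left _ _)), if_neg (Ne.symm hl.1)]
          | zero => simp
          | add x y _ _ hx hy =>
            rw [inner_add_right]
            rw [hx, hy, add_zero]
          | smul a x _ hx => rw [inner_smul_right, hx, mul_zero]
        have h1 : inner ℝ q (e k - v) = (1 : ℝ) := by
          rw [inner_sub_right, hqv, hql k (lt_of_lt_of_le (Nat.lt_succ_self k) (le_max_right _ _))]
          simp
        have h2 := real_inner_le_norm q (e k - v)
        rw [h1] at h2
        exact h2.trans (by gcongr)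
      have : (V : Set H) ⊆ _ := closure_minimal hsub hclosed
      exact this hpV
    obtain ⟨b₀, hb₀⟩ := hex k
    have hu0 : 0 < ‖u‖ := by
      by_contra h
      have : ‖u‖ = 0 := le_antisymm (not_lt.1 h) (norm_nonneg _)
      have := hlow b₀ hb₀
      simp_all
      linarith
    refine ⟨(‖u‖ ^ 2)⁻¹ • u, fun l => ?_, fun b hb => ?_⟩
    · rw [real_inner_smul_left]
      split_ifs with h
      · subst h; rw [hue]; field_simp
      · rw [huV (e l) (W.le_topologicalClosure (Submodule.subset_span ⟨l, Ne.symm h, rfl⟩)), mul_zero]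
    · rw [norm_smul, norm_inv, norm_pow, norm_norm]
      have : (‖u‖ ^ 2)⁻¹ * ‖u‖ = 1 / ‖u‖ := by field_simp
      rw [this, div_le_iff₀ hu0]
      exact hlow b hb
  choose q h1 h2 using main
  exact ⟨q, h1, h2⟩

lemma exists_tail (Λ : ℕ → ℝ) (hsum : Summable fun k => 1 / Λ k) (η : ℝ) (hη : 0 < η) :
    ∃ N : ℕ, ∀ G : Finset ℕ, (∀ l ∈ G, N ≤ l) → ∑ l ∈ G, 1 / Λ l ≤ η := by
  obtain ⟨s, hs⟩ := summable_iff_vanishing_norm.1 hsum η hη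
  refine ⟨s.sup id + 1, fun G hG => ?_⟩
  have := hs G (by
    rw [Finset.disjoint_left]
    intro a ha has
    have h1 := hG a ha
    have h2 : a ≤ s.sup id := Finset.le_sup (f := id) has
    omega)
  exact (le_abs_self _).trans this.le

lemma choose_steps (Λ : ℕ → ℝ) (hΛpos : ∀ k, 0 < Λ k)
    (hsum : Summable fun k => 1 / Λ k) (δ : ℝ) (hδ : 0 < δ) :
    ∃ h K : ℕ → ℝ, ∃ Kt : ℝ, 0 < Kt ∧ (∀ l, 0 < h l) ∧ (∀ l, 0 ≤ K l) ∧
      (∀ l s f, GoodFn s f → ∫ t, opA (h l) (Real.exp (h l * Λ l)) f t *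
        opA (h l) (Real.exp (h l * Λ l)) f t ≤ (K l) ^ 2 * ∫ t, f t * f t) ∧
      (∀ F : Finset ℕ, ∑ l ∈ F, 2 * h l ≤ δ) ∧ (∀ F : Finset ℕ, ∏ l ∈ F, K l ≤ Kt) := by
  have hlog : 0 < Real.log 6 := Real.log_pos (by norm_num)
  obtain ⟨N, hN⟩ := exists_tail Λ hsum (δ / (4 * Real.log 6)) (by positivity)
  set h : ℕ → ℝ := fun l => if l < N then δ / (4 * (N + 1)) else Real.log 6 / Λ l with hh
  set K : ℕ → ℝ := fun l => if l < N then
    Real.exp (h l * Λ l) / (Real.exp (h l * Λ l) - 1) else 1 with hKdef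
  have hpos : ∀ l, 0 < h l := by
    intro l
    have := hΛpos l
    simp only [hh]
    split_ifs <;> positivity
  have hB : ∀ l, 1 < Real.exp (h l * Λ l) := fun l =>
    Real.one_lt_exp_iff.2 (mul_pos (hpos l) (hΛpos l))
  have hK0 : ∀ l, 0 ≤ K l := by
    intro l
    simp only [hKdef]
    split_ifs
    · exact div_nonneg (Real.exp_pos _).le (by linarith [hB l])
    · exact zero_le_one
  refine ⟨h, K, ∑ G ∈ (Finset.range N).powerset, ∏ l ∈ G, K l, ?_, hpos, hK0, ?_, ?_, ?_⟩
  · refine lt_of_lt_of_le zero_lt_one ?_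
    have := Finset.single_le_sum (f := fun G => ∏ l ∈ G, K l)
      (fun G _ => Finset.prod_nonneg fun l _ => hK0 l)
      (Finset.empty_mem_powerset (Finset.range N))
    simpa using this
  · intro l s f hf
    by_cases hl : l < N
    · have : K l = Real.exp (h l * Λ l) / (Real.exp (h l * Λ l) - 1) := by simp [hKdef, hl]
      rw [this]
      exact norm_opA (hpos l).le (hB l) hf
    · have e1 : K l = 1 := by simp [hKdef, hl]
      have e2 : Real.exp (h l * Λ l) = 6 := by
        have : h l * Λ l = Real.log 6 := by
          have := (hΛpos l).ne'
          simp only [hh, hl, if_false]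
          field_simp
        rw [this, Real.exp_log (by norm_num)]
      rw [e1, e2, one_pow, one_mul]
      exact norm_opA_six (hpos l).le hf
  · intro F
    rw [← Finset.sum_filter_add_sum_filter_not F (fun l => l < N)]
    have h1 : ∑ l ∈ F.filter (fun l => l < N), 2 * h l ≤ δ / 2 := by
      calc ∑ l ∈ F.filter (fun l => l < N), 2 * h l
          = ∑ l ∈ F.filter (fun l => l < N), δ / (2 * (N + 1)) := by
            refine Finset.sum_congr rfl fun l hl => ?_
            have := (Finset.mem_filter.1 hl).2
            simp only [hh, this, if_true]
            field_simp; norm_num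
        _ = ((F.filter (fun l => l < N)).card : ℝ) * (δ / (2 * (N + 1))) := by simp
        _ ≤ (N + 1) * (δ / (2 * (N + 1))) := by
          gcongr
          have : F.filter (fun l => l < N) ⊆ Finset.range N := fun l hl =>
            Finset.mem_range.2 (Finset.mem_filter.1 hl).2
          have := Finset.card_le_card this
          rw [Finset.card_range] at this
          exact_mod_cast this.trans (Nat.le_succ N)
        _ = δ / 2 := by field_simp
    have h2 : ∑ l ∈ F.filter (fun l => ¬ l < N), 2 * h l ≤ δ / 2 := by
      calc ∑ l ∈ F.filter (fun l => ¬ l < N), 2 * h l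
          = (2 * Real.log 6) * ∑ l ∈ F.filter (fun l => ¬ l < N), 1 / Λ l := by
            rw [Finset.mul_sum]
            refine Finset.sum_congr rfl fun l hl => ?_
            have := (Finset.mem_filter.1 hl).2
            simp only [hh, this, if_false]
            ring
        _ ≤ (2 * Real.log 6) * (δ / (4 * Real.log 6)) := by
          gcongr
          exact hN _ fun l hl => not_lt.1 (Finset.mem_filter.1 hl).2
        _ = δ / 2 := by field_simp; norm_num
    linarith
  · intro F
    have e : ∏ l ∈ F, K l = ∏ l ∈ F.filter (fun l => l < N), K l := by
      rw [Finset.prod_filter]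
      refine Finset.prod_congr rfl fun l _ => ?_
      simp only [hKdef]
      split_ifs <;> rfl
    rw [e]
    exact Finset.single_le_sum (f := fun G => ∏ l ∈ G, K l)
      (fun G _ => Finset.prod_nonneg fun l _ => hK0 l)
      (Finset.mem_powerset.2 fun l hl => Finset.mem_range.2 (Finset.mem_filter.1 hl).2)

lemma GoodFn.memLp {s : ℝ} {f : ℝ → ℝ} (hf : GoodFn s f) (T : ℝ) :
    MemLp f 2 (volume.restrict (Set.Ioo (0 : ℝ) T)) := by
  obtain ⟨hm, ⟨M, hM⟩, -⟩ := hf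
  exact MemLp.of_bound hm.aestronglyMeasurable M (Filter.Eventually.of_forall hM)

lemma exp_memLp (c T : ℝ) :
    MemLp (fun t => Real.exp (-c * t)) 2 (volume.restrict (Set.Ioo (0 : ℝ) T)) := by
  refine MemLp.of_bound (C := Real.exp (|c| * |T|)) (by fun_prop) ?_
  filter_upwards [ae_restrict_mem measurableSet_Ioo] with t ht
  rw [Real.norm_eq_abs, abs_of_pos (Real.exp_pos _)]
  apply Real.exp_le_exp.2
  have h3 : -c * t ≤ |c| * |t| := by
    rw [← abs_neg c, ← abs_mul]; exact le_abs_self _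
  refine h3.trans ?_
  gcongr
  · exact ht.1.le
  · exact ht.2.le

lemma inner_toLp {T : ℝ} {f g : ℝ → ℝ} (hf : MemLp f 2 (volume.restrict (Set.Ioo (0 : ℝ) T)))
    (hg : MemLp g 2 (volume.restrict (Set.Ioo (0 : ℝ) T))) :
    inner ℝ (hf.toLp f) (hg.toLp g) = ∫ t in Set.Ioo (0 : ℝ) T, f t * g t := by
  rw [L2.inner_def]
  apply integral_congr_ae
  filter_upwards [hf.coeFn_toLp, hg.coeFn_toLp] with t h1 h2
  rw [h1, h2]
  simp [mul_comm]

lemma GoodFn.setIntegral {s T : ℝ} (hs : s ≤ T) {f : ℝ → ℝ} (hf : GoodFn s f) (g : ℝ → ℝ) :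
    ∫ t in Set.Ioo (0 : ℝ) T, f t * g t = ∫ t, f t * g t := by
  rw [← integral_Icc_eq_integral_Ioo]
  apply setIntegral_eq_integral_of_forall_compl_eq_zero
  intro t ht
  rw [hf.2.2 t fun h => ht ⟨h.1, h.2.trans hs⟩, zero_mul]

lemma finite_stage (T : ℝ) (hT : 0 < T)
    (Λ : ℕ → ℝ) (hΛpos : ∀ k, 0 < Λ k)
    (hsum : Summable fun k => 1 / Λ k)
    (ρ : ℝ) (hρ : 0 < ρ)
    (hgap : ∀ k l : ℕ, ρ * |(k : ℝ) - (l : ℝ)| ≤ |Λ k - Λ l|) (ε : ℝ) (hε : 0 < ε) :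
    ∃ C > 0, ∀ k n : ℕ, ∃ q : Lp ℝ 2 (volume.restrict (Set.Ioo (0 : ℝ) T)),
      ‖q‖ ≤ C * Real.exp (ε * Λ k) ∧
      ∀ l < n, inner ℝ q ((exp_memLp (Λ l) T).toLp _) = if k = l then (1 : ℝ) else 0 := by
  obtain ⟨s, hs, hsT, hsε⟩ : ∃ s > 0, s + s ≤ T ∧ s + s ≤ ε / 2 := by
    refine ⟨min (T / 2) (ε / 4), by positivity, ?_, ?_⟩
    · linarith [min_le_left (T / 2) (ε / 4)]
    · linarith [min_le_right (T / 2) (ε / 4)]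
  obtain ⟨C₁, hC₁, hprod⟩ := prod_lower Λ hΛpos hsum ρ hρ hgap (ε / 2) (by positivity)
  obtain ⟨h, K, Kt, hKt, hh, hK0, hK, hhs, hKs⟩ := choose_steps Λ hΛpos hsum s hs
  set ψ : ℝ → ℝ := Set.indicator (Set.Icc 0 s) (fun _ => 1) with hψ
  have gψ : GoodFn s ψ := by
    refine ⟨measurable_const.indicator measurableSet_Icc, ⟨1, fun t => ?_⟩, fun t ht => ?_⟩
    · by_cases ht : t ∈ Set.Icc 0 s <;> simp [hψ, ht]
    · simp only [hψ, Set.indicator_of_notMem ht]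
  have ψ2 : ∫ t, ψ t * ψ t = s := by
    have : (fun t => ψ t * ψ t) = Set.indicator (Set.Icc 0 s) (fun _ => 1) := by
      ext t
      by_cases ht : t ∈ Set.Icc 0 s <;> simp [hψ, ht]
    rw [this, integral_indicator measurableSet_Icc]
    simp [hs.le]
  have ψlow : ∀ c, 0 < c → s * Real.exp (-(c * s)) ≤ ∫ t, ψ t * Real.exp (-c * t) := by
    intro c hc
    calc s * Real.exp (-(c * s)) = ∫ t, ψ t * Real.exp (-(c * s)) := by
          rw [integral_mul_const, hψ, integral_indicator measurableSet_Icc]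
          simp [hs.le]
      _ ≤ _ := by
          refine integral_mono (gψ.integrable_mul measurable_const ⟨_, fun t _ => le_rfl⟩)
            (gψ.integrable_exp c) fun t => ?_
          by_cases ht : t ∈ Set.Icc 0 s
          · simp only [hψ, Set.indicator_of_mem ht, one_mul]
            apply Real.exp_le_exp.2
            nlinarith [ht.2]
          · simp only [hψ, Set.indicator_of_notMem ht, zero_mul, le_refl]
  refine ⟨Kt * √s / (s * C₁), by positivity, fun k n => ?_⟩
  set F := (Finset.range n).erase k with hF
  have hkF : k ∉ F := Finset.notMem_erase _ _
  obtain ⟨f, gf, fL, f2⟩ := iterate_exists Λ h K hh hK s ψ gψ F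
  have hsF : s + ∑ l ∈ F, 2 * h l ≤ T := by linarith [hhs F]
  set D := (∏ l ∈ F, mlt (h l) (Λ l) (Λ k)) * ∫ t, ψ t * Real.exp (-Λ k * t) with hD
  have hΛk := hΛpos k
  have Dlow : s * C₁ * Real.exp (-(ε * Λ k)) ≤ |D| := by
    have p1 : ∏ l ∈ F, (|1 - Λ k / Λ l| * Real.exp (-(2 * h l) * Λ k)) ≤
        |∏ l ∈ F, mlt (h l) (Λ l) (Λ k)| := by
      rw [Finset.abs_prod]
      exact Finset.prod_le_prod (fun l _ => by positivity)
        fun l _ => mult_lower (hh l) (hΛpos l) hΛk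
    have p2 : ∏ l ∈ F, Real.exp (-(2 * h l) * Λ k) = Real.exp (-((∑ l ∈ F, 2 * h l) * Λ k)) := by
      rw [← Real.exp_sum, Finset.sum_mul, ← Finset.sum_neg_distrib]
      congr 1
      exact Finset.sum_congr rfl fun l _ => by ring
    have p3 : Real.exp (-(s * Λ k)) ≤ Real.exp (-((∑ l ∈ F, 2 * h l) * Λ k)) := by
      apply Real.exp_le_exp.2
      nlinarith [hhs F]
    rw [Finset.prod_mul_distrib, p2] at p1
    have p4 := ψlow (Λ k) hΛk
    rw [hD, abs_mul]
    calc s * C₁ * Real.exp (-(ε * Λ k))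
        ≤ s * C₁ * (Real.exp (-(ε / 2 * Λ k)) * Real.exp (-(s * Λ k)) * Real.exp (-(Λ k * s))) := by
          gcongr
          rw [← Real.exp_add, ← Real.exp_add]
          apply Real.exp_le_exp.2
          nlinarith
      _ = ((C₁ * Real.exp (-(ε / 2 * Λ k))) * Real.exp (-(s * Λ k))) *
          (s * Real.exp (-(Λ k * s))) := by ring
      _ ≤ _ := by
          refine mul_le_mul (le_trans ?_ p1) (p4.trans (le_abs_self _)) (by positivity)
            (abs_nonneg _)
          exact mul_le_mul (hprod k F hkF) p3 (by positivity)
            (Finset.prod_nonneg fun l _ => abs_nonneg _)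
  have Dpos : 0 < |D| := lt_of_lt_of_le (by positivity) Dlow
  have D0 : D ≠ 0 := abs_pos.1 Dpos
  have gq := gf.smul D⁻¹
  refine ⟨(gq.memLp T).toLp _, ?_, fun l hl => ?_⟩
  · have n2 : ‖(gq.memLp T).toLp _‖ ^ 2 = D⁻¹ ^ 2 * ∫ t, f t * f t := by
      rw [← real_inner_self_eq_norm_sq, inner_toLp, gq.setIntegral hsF, ← integral_const_mul]
      congr 1; ext t; ring
    have : ‖(gq.memLp T).toLp _‖ ^ 2 ≤ (|D|⁻¹ * (Kt * √s)) ^ 2 := by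
      rw [n2, mul_pow, mul_pow, Real.sq_sqrt hs.le, ← abs_inv, sq_abs]
      gcongr
      rw [ψ2] at f2
      refine f2.trans ?_
      gcongr
      · exact Finset.prod_nonneg fun l _ => hK0 l
      · exact hKs F
    refine (abs_le_of_sq_le_sq' this (by positivity)).2.trans ?_
    calc |D|⁻¹ * (Kt * √s) ≤ (s * C₁ * Real.exp (-(ε * Λ k)))⁻¹ * (Kt * √s) := by gcongr
      _ = _ := by rw [Real.exp_neg]; field_simp
  · rw [inner_toLp, gq.setIntegral hsF]
    have : ∫ t, D⁻¹ * f t * Real.exp (-Λ l * t) = D⁻¹ * ∫ t, f t * Real.exp (-Λ l * t) := by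
      rw [← integral_const_mul]
      congr 1; ext t; ring
    rw [this, fL]
    split_ifs with hkl
    · subst hkl
      exact inv_mul_cancel₀ D0
    · have : l ∈ F := Finset.mem_erase.2 ⟨Ne.symm hkl, Finset.mem_range.2 hl⟩
      rw [Finset.prod_eq_zero this (mlt_self _ _)]
      simp

/-- Existence of a biorthogonal family to the exponentials `e^{-Λ_k t}` in `L²(0,T)`,
with the bound `‖q_k‖ ≤ C_ε e^{ε Λ_k}`. -/
theorem exists_biorthogonal_family (T : ℝ) (hT : 0 < T)
    (Λ : ℕ → ℝ) (hΛpos : ∀ k, 0 < Λ k)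
    (hsum : Summable fun k => 1 / Λ k)
    (ρ : ℝ) (hρ : 0 < ρ)
    (hgap : ∀ k l : ℕ, ρ * |(k : ℝ) - (l : ℝ)| ≤ |Λ k - Λ l|) :
    ∃ q : ℕ → Lp ℝ 2 (volume.restrict (Set.Ioo (0 : ℝ) T)),
      (∀ k l : ℕ,
        (∫ t in Set.Ioo (0 : ℝ) T, (q k : ℝ → ℝ) t * Real.exp (-Λ l * t)) =
          if k = l then 1 else 0) ∧
      (∀ ε > 0, ∃ C > 0, ∀ k, ‖q k‖ ≤ C * Real.exp (ε * Λ k)) := by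
  have fs := finite_stage T hT Λ hΛpos hsum ρ hρ hgap
  choose C hC hfin using fs
  obtain ⟨q, h1, h2⟩ := hilbert_bio (fun l => (exp_memLp (Λ l) T).toLp _)
    (fun k b => ∃ ε, ∃ hε : 0 < ε, b = C ε hε * Real.exp (ε * Λ k))
    (fun k => ⟨_, 1, one_pos, rfl⟩) (by
      rintro k b ⟨ε, hε, rfl⟩
      exact ⟨mul_pos (hC ε hε) (Real.exp_pos _), fun n => hfin ε hε k n⟩)
  refine ⟨q, fun k l => ?_, fun ε hε => ⟨C ε hε, hC ε hε, fun k => h2 k _ ⟨ε, hε, rfl⟩⟩⟩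
  rw [← h1 k l, L2.inner_def]
  apply integral_congr_ae
  filter_upwards [(exp_memLp (Λ l) T).coeFn_toLp] with t ht
  rw [ht]
  simp [mul_comm]
end

section
/- Let 0 ≤ α < 1 and 0 ≤ ν ≤ 1/2, and let (j_n)_{n≥1} be a sequence of real numbers satisfying (n + ν/2 − 1/4)·π ≤ j_n ≤ (n + ν/4 − 1/8)·π for all n ≥ 1. Define λ_n = ((2−α)/2)² · j_n². Then for all n, m ≥ 1 one has |λ_n − λ_m| ≥ (7/64)·π²·(2−α)²·|n² − m²|. -/
/-- Gap property: if `0 ≤ α < 1`, `0 ≤ ν ≤ 1/2`, and `(j_n)_{n≥1}` satisfies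
`(n + ν/2 - 1/4)π ≤ j_n ≤ (n + ν/4 - 1/8)π`, then the eigenvalues
`λ_n = ((2-α)/2)² j_n²` satisfy `|λ_n - λ_m| ≥ (7/64)π²(2-α)²|n² - m²|`. -/
theorem eigenvalue_gap (α ν : ℝ) (hα0 : 0 ≤ α) (hα1 : α < 1)
    (hν0 : 0 ≤ ν) (hν : ν ≤ 1 / 2)
    (j lam : ℕ → ℝ)
    (hjlow : ∀ n : ℕ, 1 ≤ n → ((n : ℝ) + ν / 2 - 1 / 4) * Real.pi ≤ j n)
    (hjhigh : ∀ n : ℕ, 1 ≤ n → j n ≤ ((n : ℝ) + ν / 4 - 1 / 8) * Real.pi)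
    (hlam : ∀ n, lam n = ((2 - α) / 2) ^ 2 * j n ^ 2) :
    ∀ n m : ℕ, 1 ≤ n → 1 ≤ m →
      7 / 64 * Real.pi ^ 2 * (2 - α) ^ 2 * |(n : ℝ) ^ 2 - (m : ℝ) ^ 2| ≤
        |lam n - lam m| := by
  have hpi := Real.pi_pos
  have key : ∀ n m : ℕ, 1 ≤ m → m < n →
      7 / 64 * Real.pi ^ 2 * (2 - α) ^ 2 * |(n : ℝ) ^ 2 - (m : ℝ) ^ 2| ≤
        |lam n - lam m| := by
    intro n m hm hmn
    have hm' : (1 : ℝ) ≤ m := by exact_mod_cast hm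
    have hmn' : (m : ℝ) + 1 ≤ n := by exact_mod_cast hmn
    have h1 := hjlow n (by omega)
    have h2 := hjhigh m hm
    have h3 := hjlow m hm
    have hjm : 0 ≤ j m := le_trans (mul_nonneg (by linarith) hpi.le) h3
    have h4 : (((n : ℝ) + ν / 2 - 1 / 4) * Real.pi) ^ 2 ≤ j n ^ 2 :=
      pow_le_pow_left₀ (mul_nonneg (by linarith) hpi.le) h1 2
    have h5 : j m ^ 2 ≤ (((m : ℝ) + ν / 4 - 1 / 8) * Real.pi) ^ 2 :=
      pow_le_pow_left₀ hjm h2 2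
    have h6 : (7 / 8 * ((n : ℝ) - m)) * (7 / 8 * ((n : ℝ) + m)) ≤
        ((n : ℝ) - m - (1 / 8 - ν / 4)) * ((n : ℝ) + m - 3 * (1 / 8 - ν / 4)) :=
      mul_le_mul (by linarith) (by linarith) (by linarith) (by linarith)
    have h7 : (0 : ℝ) ≤ (n : ℝ) ^ 2 - (m : ℝ) ^ 2 := by nlinarith
    have h8 : 7 / 16 * ((n : ℝ) ^ 2 - (m : ℝ) ^ 2) ≤
        ((n : ℝ) + ν / 2 - 1 / 4) ^ 2 - ((m : ℝ) + ν / 4 - 1 / 8) ^ 2 := by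
      linarith
    have h9 : 7 / 16 * ((n : ℝ) ^ 2 - (m : ℝ) ^ 2) * Real.pi ^ 2 ≤ j n ^ 2 - j m ^ 2 := by
      have := mul_le_mul_of_nonneg_right h8 (sq_nonneg Real.pi)
      linarith
    have h10 := mul_le_mul_of_nonneg_left h9 (sq_nonneg ((2 - α) / 2))
    rw [abs_of_nonneg h7]
    refine le_trans ?_ (le_abs_self _)
    rw [hlam, hlam]
    linarith
  intro n m hn hm
  rcases lt_trichotomy n m with h | h | h
  · have := key m n hn h
    rwa [abs_sub_comm, abs_sub_comm (lam m)] at this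
  · subst h
    simp
  · exact key n m hm h
end

section
/- Let T > 0. Let (λ_k)_{k≥1} be a sequence of positive real numbers with ∑_{k≥1} 1/λ_k < +∞. Let (Φ_k)_{k≥1} be a sequence of nonzero real numbers, and set T₀ = limsup_{k→∞} ( −log|Φ_k| / λ_k ); assume T₀ < T (in particular T₀ < +∞). Let (u_k)_{k≥1} be a real sequence with ∑_{k≥1} u_k² < +∞, and let (q_k)_{k≥1} be functions in L²(0,T) such that for every ε > 0 there exists C_ε > 0 with ‖q_k‖_{L²(0,T)} ≤ C_ε · e^{ε λ_k} for all k ≥ 1. Then ∑_{k≥1} ( e^{−λ_k T} · |u_k| / |Φ_k| ) · ‖q_k‖_{L²(0,T)} < +∞; in particular the series ∑_{k≥1} ( e^{−λ_k T} · u_k / Φ_k ) · q_k converges absolutely in L²(0,T). -/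
open MeasureTheory

/-- Key estimate for the null control: if `T₀ = limsup_k (-log|Φ_k|/λ_k) < T`,
`∑ 1/λ_k < ∞`, `∑ u_k² < ∞` and `‖q_k‖_{L²(0,T)} ≤ C_ε e^{ε λ_k}` for every `ε > 0`,
then `∑_k (e^{-λ_k T} |u_k| / |Φ_k|) ‖q_k‖ < ∞`; in particular the series
`∑_k (e^{-λ_k T} u_k / Φ_k) q_k` converges absolutely in `L²(0,T)`. -/
theorem control_series_summable (T : ℝ) (hT : 0 < T)
    (lam : ℕ → ℝ) (hlam : ∀ k, 0 < lam k)
    (hsum : Summable fun k => 1 / lam k)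
    (Φ : ℕ → ℝ) (hΦ : ∀ k, Φ k ≠ 0)
    (hT0 : Filter.limsup (fun k => ((-Real.log |Φ k| / lam k : ℝ) : EReal))
        Filter.atTop < (T : EReal))
    (u : ℕ → ℝ) (hu : Summable fun k => u k ^ 2)
    (q : ℕ → Lp ℝ 2 (volume.restrict (Set.Ioo (0 : ℝ) T)))
    (hq : ∀ ε > 0, ∃ C > 0, ∀ k, ‖q k‖ ≤ C * Real.exp (ε * lam k)) :
    (Summable fun k => Real.exp (-lam k * T) * |u k| / |Φ k| * ‖q k‖) ∧
    Summable fun k => (Real.exp (-lam k * T) * u k / Φ k) • q k := by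
  have key : Summable fun k => Real.exp (-lam k * T) * |u k| / |Φ k| * ‖q k‖ := by
    obtain ⟨S, hS1, hS2⟩ := EReal.lt_iff_exists_real_btwn.1 hT0
    have hST : S < T := by exact_mod_cast hS2
    have hev := Filter.eventually_lt_of_limsup_lt hS1
    obtain ⟨C, hC, hqC⟩ := hq ((T - S) / 2) (by linarith)
    have hM : ∀ k, |u k| ≤ 1 + ∑' j, u j ^ 2 := by
      intro k
      have h1 := hu.le_tsum k (fun j _ => sq_nonneg (u j))
      have h2 := sq_abs (u k)
      nlinarith [sq_nonneg (|u k| - 1), abs_nonneg (u k)]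
    set M := 1 + ∑' j, u j ^ 2 with hMdef
    have hM0 : 0 ≤ M := le_trans (abs_nonneg _) (hM 0)
    refine Summable.of_norm_bounded_eventually_nat
      (g := fun k => (M * C * (2 / (T - S))) * (1 / lam k)) (hsum.mul_left _) ?_
    filter_upwards [hev] with k hk
    have hk' : -Real.log |Φ k| / lam k < S := by exact_mod_cast hk
    rw [div_lt_iff₀ (hlam k)] at hk'
    have hpos : 0 < |Φ k| := abs_pos.2 (hΦ k)
    have hinv : |Φ k|⁻¹ ≤ Real.exp (S * lam k) := by
      rw [← Real.exp_log (inv_pos.2 hpos), Real.log_inv]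
      exact Real.exp_le_exp.2 hk'.le
    rw [Real.norm_of_nonneg (by positivity)]
    have hd : 0 < T - S := by linarith
    have hl := hlam k
    have hx : 0 < (T - S) / 2 * lam k := by positivity
    calc Real.exp (-lam k * T) * |u k| / |Φ k| * ‖q k‖
        = Real.exp (-lam k * T) * |u k| * |Φ k|⁻¹ * ‖q k‖ := by rw [div_eq_mul_inv]
      _ ≤ Real.exp (-lam k * T) * M * Real.exp (S * lam k)
            * (C * Real.exp ((T - S) / 2 * lam k)) := by
          gcongr
          · exact hM k
          · exact hqC k
      _ = M * C * (Real.exp (-lam k * T) * Real.exp (S * lam k)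
            * Real.exp ((T - S) / 2 * lam k)) := by ring
      _ = M * C * (Real.exp ((T - S) / 2 * lam k))⁻¹ := by
          rw [← Real.exp_add, ← Real.exp_add, ← Real.exp_neg]
          congr 2
          ring
      _ ≤ M * C * ((T - S) / 2 * lam k)⁻¹ := by
          gcongr
          linarith [Real.add_one_le_exp ((T - S) / 2 * lam k)]
      _ = (M * C * (2 / (T - S))) * (1 / lam k) := by
          field_simp
  refine ⟨key, Summable.of_norm ?_⟩
  refine key.congr fun k => ?_
  rw [norm_smul, norm_div, norm_mul, Real.norm_eq_abs, Real.norm_eq_abs, Real.norm_eq_abs,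
    Real.abs_exp]
end

section
/- Let d ≥ 0, let t = (t_1 ≤ t_2 ≤ … ≤ t_{N+d+1}) be a nondecreasing knot sequence such that t_k < t_{k+d+1} for every k with 1 ≤ k ≤ N (i.e. no knot occurs with multiplicity greater than d+1), and let B_{k,d} (1 ≤ k ≤ N) be the B-splines defined by the Cox–de Boor recursion on t. Then the functions B_{1,d}, …, B_{N,d} are linearly independent: if c_1, …, c_N are real numbers with ∑_{k=1}^{N} c_k B_{k,d}(x) = 0 for all x ∈ ℝ, then c_1 = … = c_N = 0. -/
/-- The B-splines `B_{k,d}` on the knot sequence `t`, defined by the Cox–de Boor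
recursion: `B_{k,0}(x) = 1` if `t_k ≤ x < t_{k+1}` and `0` otherwise, and
`B_{k,d}(x) = ((x - t_k)/(t_{k+d} - t_k)) B_{k,d-1}(x)
  + ((t_{k+d+1} - x)/(t_{k+d+1} - t_{k+1})) B_{k+1,d-1}(x)`,
where any term whose denominator is zero is taken to be `0`. -/
noncomputable def coxDeBoor (t : ℕ → ℝ) : ℕ → ℕ → ℝ → ℝ
  | k, 0, x => if t k ≤ x ∧ x < t (k + 1) then 1 else 0
  | k, d + 1, x =>
      (if t (k + d + 1) = t k then 0
        else (x - t k) / (t (k + d + 1) - t k) * coxDeBoor t k d x) +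
      (if t (k + d + 2) = t (k + 1) then 0
        else (t (k + d + 2) - x) / (t (k + d + 2) - t (k + 1)) * coxDeBoor t (k + 1) d x)

theorem cdb_mono (M : ℕ) (t : ℕ → ℝ)
    (hmono : ∀ i : ℕ, 1 ≤ i → i < M → t i ≤ t (i + 1)) (i j : ℕ) (hi : 1 ≤ i) (hij : i ≤ j)
    (hj : j ≤ M) : t i ≤ t j := by
  induction j, hij using Nat.le_induction with
  | base => exact le_rfl
  | succ n hn ih => exact (ih (by omega)).trans (hmono n (by omega) (by omega))

theorem cdb_vanish (M : ℕ) (t : ℕ → ℝ)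
    (hmono : ∀ i : ℕ, 1 ≤ i → i < M → t i ≤ t (i + 1)) (d : ℕ) :
    ∀ j : ℕ, 1 ≤ j → j + d + 1 ≤ M → ∀ x, x < t j → coxDeBoor t j d x = 0 := by
  induction d with
  | zero =>
    intro j hj hM x hx
    simp only [coxDeBoor]
    rw [if_neg]
    intro h
    exact absurd h.1 (not_le.mpr hx)
  | succ d ih =>
    intro j hj hM x hx
    have h1 := ih j hj (by omega) x hx
    have h2 := ih (j + 1) (by omega) (by omega) x
      (hx.trans_le (hmono j hj (by omega)))
    simp [coxDeBoor, h1, h2]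

theorem cdb_local (M : ℕ) (t : ℕ → ℝ)
    (hmono : ∀ i : ℕ, 1 ≤ i → i < M → t i ≤ t (i + 1)) (m : ℕ) (a : ℝ)
    (hb : a < t (m + 1)) (d : ℕ) :
    ∀ j e : ℕ, 1 ≤ j → j ≤ m → d + j = m + e → j + d + 1 ≤ M →
      (∀ i, j ≤ i → i ≤ m → t i = a) →
      ∃ g : ℝ → ℝ, Continuous g ∧ 0 < g a ∧
        ∀ x, a ≤ x → x < t (m + 1) → coxDeBoor t j d x = (x - a) ^ e * g x := by
  induction d with
  | zero =>
    intro j e h1 hjm he hM hi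
    obtain rfl : j = m := by omega
    obtain rfl : e = 0 := by omega
    refine ⟨fun _ => 1, continuous_const, one_pos, fun x hx hx2 => ?_⟩
    have := hi j le_rfl le_rfl
    simp [coxDeBoor, this, hx, hx2]
  | succ d ih =>
    intro j e h1 hjm he hM hi
    have hja := hi j le_rfl hjm
    -- second term
    have second : ∃ g : ℝ → ℝ, Continuous g ∧ 0 ≤ g a ∧ (j + 1 ≤ m → 0 < g a) ∧
        ∀ x, a ≤ x → x < t (m + 1) →
        (if t (j + d + 2) = t (j + 1) then 0
        else (t (j + d + 2) - x) / (t (j + d + 2) - t (j + 1)) * coxDeBoor t (j + 1) d x)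
          = (x - a) ^ e * g x := by
      by_cases hm : j + 1 ≤ m
      · obtain ⟨g, gc, gp, hg⟩ := ih (j + 1) e (by omega) hm (by omega) (by omega)
          (fun i hi1 hi2 => hi i (by omega) hi2)
        have hj1 := hi (j + 1) (by omega) hm
        have hlt : a < t (j + d + 2) :=
          hb.trans_le (cdb_mono M t hmono _ _ (by omega) (by omega) (by omega))
        have hp : 0 < t (j + d + 2) - a := sub_pos.mpr hlt
        refine ⟨fun x => (t (j + d + 2) - x) / (t (j + d + 2) - a) * g x, by fun_prop, ?_, ?_, ?_⟩
        · positivity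
        · intro _; positivity
        · intro x hx hx2
          rw [hj1, if_neg hlt.ne', hg x hx hx2]
          ring
      · refine ⟨fun _ => 0, continuous_const, le_rfl, fun h => absurd h hm, fun x hx hx2 => ?_⟩
        obtain rfl : j = m := by omega
        rw [cdb_vanish M t hmono d (j + 1) (by omega) (by omega) x hx2]
        simp
    have first : ∃ g : ℝ → ℝ, Continuous g ∧ 0 ≤ g a ∧ (m < j + 1 → 0 < g a) ∧
        ∀ x, a ≤ x → x < t (m + 1) →
        (if t (j + d + 1) = t j then 0
        else (x - t j) / (t (j + d + 1) - t j) * coxDeBoor t j d x)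
          = (x - a) ^ e * g x := by
      by_cases hm : m = j + d + 1
      · refine ⟨fun _ => 0, continuous_const, le_rfl, fun h => by omega, fun x hx hx2 => ?_⟩
        rw [if_pos]
        · simp
        · rw [hja, hi _ (by omega) (by omega)]
      · obtain ⟨e, rfl⟩ : ∃ e', e = e' + 1 := ⟨e - 1, by omega⟩
        obtain ⟨g, gc, gp, hg⟩ := ih j e (by omega) hjm (by omega) (by omega) hi
        have hlt : a < t (j + d + 1) :=
          hb.trans_le (cdb_mono M t hmono _ _ (by omega) (by omega) (by omega))
        have hp : 0 < t (j + d + 1) - a := sub_pos.mpr hlt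
        refine ⟨fun x => g x / (t (j + d + 1) - a), by fun_prop, ?_, ?_, ?_⟩
        · positivity
        · intro _; positivity
        · intro x hx hx2
          rw [hja, if_neg hlt.ne', hg x hx hx2]
          ring
    obtain ⟨g1, c1, n1, p1, e1⟩ := first
    obtain ⟨g2, c2, n2, p2, e2⟩ := second
    refine ⟨fun x => g1 x + g2 x, c1.add c2, ?_, fun x hx hx2 => ?_⟩
    · by_cases h : j + 1 ≤ m
      · exact add_pos_of_nonneg_of_pos n1 (p2 h)
      · exact add_pos_of_pos_of_nonneg (p1 (by omega)) n2
    · rw [coxDeBoor, e1 x hx hx2, e2 x hx hx2]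
      ring

/-- Linear independence of B-splines: on a nondecreasing knot sequence
`t_1 ≤ … ≤ t_{N+d+1}` in which `t_k < t_{k+d+1}` for all `1 ≤ k ≤ N`, the
B-splines `B_{1,d}, …, B_{N,d}` are linearly independent. -/
theorem coxDeBoor_linearIndependent (N d : ℕ) (t : ℕ → ℝ)
    (hmono : ∀ i : ℕ, 1 ≤ i → i < N + d + 1 → t i ≤ t (i + 1))
    (hmult : ∀ k : ℕ, 1 ≤ k → k ≤ N → t k < t (k + d + 1))
    (c : ℕ → ℝ)
    (hc : ∀ x : ℝ, ∑ k ∈ Finset.Icc 1 N, c k * coxDeBoor t k d x = 0) :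
    ∀ k : ℕ, 1 ≤ k → k ≤ N → c k = 0 := by
  intro k
  induction k using Nat.strong_induction_on with
  | _ k IH =>
  intro hk1 hkN
  have hex : ∃ n, t k < t (k + n + 1) := ⟨d, hmult k hk1 hkN⟩
  classical
  obtain ⟨n, hn, hmin⟩ : ∃ n, t k < t (k + n + 1) ∧ ∀ i < n, ¬ t k < t (k + i + 1) :=
    ⟨Nat.find hex, Nat.find_spec hex, fun i hi => Nat.find_min hex hi⟩
  have hnd : n ≤ d := by
    by_contra h
    exact hmin d (by omega) (hmult k hk1 hkN)
  have heq : ∀ i, k ≤ i → i ≤ k + n → t i = t k := by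
    intro i h1 h2
    apply le_antisymm
    · rcases Nat.eq_or_lt_of_le h1 with h | h
      · rw [h]
      · have := hmin (i - k - 1) (by omega)
        rw [show k + (i - k - 1) + 1 = i by omega] at this
        exact not_lt.mp this
    · exact cdb_mono _ t hmono k i hk1 h1 (by omega)
  obtain ⟨e, he⟩ : ∃ e, d = n + e := ⟨d - n, by omega⟩
  have key : ∀ j, ∃ g : ℝ → ℝ, j ∈ Finset.Icc 1 N → Continuous g ∧ (j ≠ k → g (t k) = 0) ∧
      (j = k → g (t k) = 0 → c k = 0) ∧
      ∀ x, t k ≤ x → x < t (k + n + 1) → c j * coxDeBoor t j d x = (x - t k) ^ e * g x := by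
    intro j
    by_cases hj : j ∈ Finset.Icc 1 N
    swap
    · exact ⟨0, fun h => absurd h hj⟩
    have hj' := Finset.mem_Icc.mp hj
    rcases lt_or_ge j k with hjk | hjk
    · refine ⟨fun _ => 0, fun _ => ⟨continuous_const, fun _ => rfl, fun h => by omega, ?_⟩⟩
      intro x _ _
      rw [IH j hjk hj'.1 hj'.2]; simp
    rcases lt_or_ge (k + n) j with hjm | hjm
    · refine ⟨fun _ => 0, fun _ => ⟨continuous_const, fun _ => rfl, fun h => by omega, ?_⟩⟩
      intro x _ hx
      rw [cdb_vanish _ t hmono d j hj'.1 (by omega) x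
        (hx.trans_le (cdb_mono _ t hmono _ _ (by omega) (by omega) (by omega)))]
      simp
    obtain ⟨g, gc, gp, hg⟩ := cdb_local _ t hmono (k + n) (t k) hn d j (e + (j - k)) hj'.1 hjm
      (by omega) (by omega) (fun i h1 h2 => heq i (by omega) h2)
    refine ⟨fun x => c j * ((x - t k) ^ (j - k) * g x), fun _ => ⟨by fun_prop, ?_, ?_, ?_⟩⟩
    · intro hne
      have : j - k ≠ 0 := by omega
      simp [this]
    · rintro rfl h
      simpa [gp.ne'] using h
    · intro x h1 h2
      rw [hg x h1 h2, pow_add]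
      ring
  choose g hg using key
  set G : ℝ → ℝ := fun x => ∑ j ∈ Finset.Icc 1 N, g j x with hG
  have hGc : Continuous G := continuous_finsetSum _ (fun j hj => (hg j hj).1)
  have hG0 : ∀ x ∈ Set.Ioo (t k) (t (k + n + 1)), G x = 0 := by
    intro x hx
    have h := hc x
    rw [Finset.sum_congr rfl (fun j hj => (hg j hj).2.2.2 x hx.1.le hx.2),
      ← Finset.mul_sum] at h
    exact (mul_eq_zero.mp h).resolve_left (pow_ne_zero _ (sub_pos.mpr hx.1).ne')
  have hGa : G (t k) = 0 := by
    have hcl : IsClosed {x | G x = 0} := isClosed_eq hGc continuous_const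
    have hsub := hcl.closure_subset_iff.mpr (show Set.Ioo (t k) (t (k + n + 1)) ⊆ _ from hG0)
    rw [closure_Ioo hn.ne] at hsub
    exact hsub (Set.left_mem_Icc.mpr hn.le)
  have hkmem : k ∈ Finset.Icc 1 N := Finset.mem_Icc.mpr ⟨hk1, hkN⟩
  have : G (t k) = g k (t k) :=
    Finset.sum_eq_single_of_mem k hkmem (fun j hj hne => (hg j hj).2.1 hne)
  exact (hg k hkmem).2.2.1 rfl (this ▸ hGa)
end
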